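/- Let L₁, L₂ : ℝ^n → ℝ be three times continuously differentiable with bounded first, second and third derivatives, and suppose the Lie bracket [∇L₁, ∇L₂] vanishes identically on ℝ^n. Fix θ₀ ∈ ℝ^n and define θ₁(h) = θ₀ − h ∇L₁(θ₀) and θ₂(h) = θ₁(h) − h ∇L₂(θ₁(h)). For each h > 0 let θ̃_h solve the gradient flow θ̇(t) = −∇L̃_{1,2}(θ(t)) with θ̃_h(0) = θ₀, where L̃_{1,2}(θ) = L₁(θ) + L₂(θ) + (h/4)‖∇L₁(θ)‖² + (h/4)‖∇L₂(θ)‖². Then there exist constants C > 0 and h₀ > 0 such that for all h ∈ (0, h₀), ‖θ̃_h(h) − θ₂(h)‖ ≤ C h³. -/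

import Mathlib

open Set

/-- The Lie bracket of two vector fields `F, G : ℝⁿ → ℝⁿ`:
`[F, G](θ) = DG(θ) F(θ) - DF(θ) G(θ)`. -/
noncomputable def lieBracket {n : ℕ}
    (F G : EuclideanSpace ℝ (Fin n) → EuclideanSpace ℝ (Fin n))
    (θ : EuclideanSpace ℝ (Fin n)) : EuclideanSpace ℝ (Fin n) :=
  fderiv ℝ G θ (F θ) - fderiv ℝ F θ (G θ)

/-!
Put `V = -∇L₁` and `W = -∇L₂`. As Hessians are symmetric, the negative gradient of the modified loss
is `V + W - (h/2)(DV V + DW W)`. Up to `O(h³)`, its integral curve from `x` reaches at time `h`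
`x + h (V + W) + (h²/2)(D(V + W)(V + W) - DV V - DW W) = x + h (V + W) + (h²/2)(DV W + DW V)`,
whereas Euler steps along `V` and then `W` lead to `x + h (V + W) + h² DW V`. The difference is
`-(h²/2) [V, W]`, so the bracket is the leading term of the drift.
-/

open scoped Gradient NNReal

section Taylor

variable {E F : Type*} [NormedAddCommGroup E] [NormedSpace ℝ E]
  [NormedAddCommGroup F] [NormedSpace ℝ F]

lemma norm_sub_sub_fderiv_le {f : E → F} {K : ℝ≥0} (hf : Differentiable ℝ f)
    (hf' : LipschitzWith K (fderiv ℝ f)) (x y : E) :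
    ‖f y - f x - fderiv ℝ f x (y - x)‖ ≤ K * ‖y - x‖ ^ 2 := by
  have fderiv_near : ∀ z ∈ Metric.closedBall x ‖y - x‖,
      ‖fderiv ℝ f z - fderiv ℝ f x‖ ≤ K * ‖y - x‖ := fun z hz =>
    (hf'.norm_sub_le z x).trans (by gcongr; exact mem_closedBall_iff_norm.mp hz)
  calc ‖f y - f x - fderiv ℝ f x (y - x)‖ ≤ K * ‖y - x‖ * ‖y - x‖ :=
        (convex_closedBall x ‖y - x‖).norm_image_sub_le_of_norm_fderiv_le' (fun z _ => hf z)
          fderiv_near (Metric.mem_closedBall_self (norm_nonneg _))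
          (mem_closedBall_iff_norm.mpr le_rfl)
    _ = K * ‖y - x‖ ^ 2 := by ring

lemma norm_sub_quadratic_le_of_norm_deriv_sub_affine_le {γ γ' : ℝ → E} {h C : ℝ} {v w : E}
    (hγ : ∀ t ∈ Icc 0 h, HasDerivWithinAt γ (γ' t) (Icc 0 h) t)
    (hC : ∀ t ∈ Icc 0 h, ‖γ' t - v - t • w‖ ≤ C) {t : ℝ} (ht : t ∈ Icc 0 h) :
    ‖γ t - γ 0 - t • v - (t ^ 2 / 2) • w‖ ≤ C * t := by
  have remainder_deriv : ∀ r ∈ Icc 0 h,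
      HasDerivWithinAt (fun r => γ r - r • v - (r ^ 2 / 2) • w) (γ' r - v - r • w) (Icc 0 h) r := by
    intro r hr
    have linear_deriv : HasDerivAt (fun r : ℝ => r • v) v r := by
      simpa only [one_smul, id] using (hasDerivAt_id r).smul_const v
    have quadratic_deriv : HasDerivAt (fun r : ℝ => (r ^ 2 / 2) • w) (r • w) r := by
      simpa using ((hasDerivAt_pow 2 r).div_const 2).smul_const w
    exact ((hγ r hr).sub linear_deriv.hasDerivWithinAt).sub quadratic_deriv.hasDerivWithinAt
  have := norm_image_sub_le_of_norm_deriv_le_segment' remainder_deriv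
    (fun r hr => hC r (Ico_subset_Icc_self hr)) t ht
  convert this using 2
  · simp only [zero_smul, sub_zero, ne_eq, OfNat.ofNat_ne_zero, not_false_eq_true, zero_pow,
      zero_div]
    abel
  · rw [sub_zero]

end Taylor

section VectorFields

variable {E : Type*} [NormedAddCommGroup E] [NormedSpace ℝ E]

/-- The class `C^{1,1}` with all its bounds equal to `K`: the vector field `V` and its derivative
are bounded by `K`, and the derivative is `K`-Lipschitz. These are the bounds that control the
third-order remainders below. -/
structure IsBoundedC11 (K : ℝ≥0) (V : E → E) : Prop where
  differentiable : Differentiable ℝ V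
  norm_le : ∀ x, ‖V x‖ ≤ K
  norm_fderiv_le : ∀ x, ‖fderiv ℝ V x‖ ≤ K
  lipschitzWith_fderiv : LipschitzWith K (fderiv ℝ V)

/-- The second derivative `DV(x) V(x)` of an integral curve of the vector field `V` as it passes
through `x`. It is the correction term of the modified vector field. -/
noncomputable def acceleration (V : E → E) (x : E) : E :=
  fderiv ℝ V x (V x)

/-- One step of length `h` of the explicit Euler method along `V`. A gradient descent step on a
loss `L` with learning rate `h` is the case `V = -∇ L`. -/
def eulerStep (h : ℝ) (V : E → E) (x : E) : E :=
  x + h • V x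

variable {V W : E → E} {K K' : ℝ≥0}

lemma acceleration_neg (V : E → E) (x : E) : acceleration (-V) x = acceleration V x := by
  simp only [acceleration, fderiv_neg, Pi.neg_apply, neg_apply, map_neg, neg_neg]

lemma lieBracket_neg_neg (V W : E → E) :
    VectorField.lieBracket ℝ (-V) (-W) = VectorField.lieBracket ℝ V W := by
  ext x
  simp only [VectorField.lieBracket, fderiv_neg, Pi.neg_apply, neg_apply, map_neg, neg_neg]

namespace IsBoundedC11

lemma lipschitzWith (hV : IsBoundedC11 K V) : LipschitzWith K V :=
  lipschitzWith_of_nnnorm_fderiv_le hV.differentiable hV.norm_fderiv_le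

lemma neg (hV : IsBoundedC11 K V) : IsBoundedC11 K (-V) where
  differentiable := hV.differentiable.neg
  norm_le x := by simpa only [Pi.neg_apply, norm_neg] using hV.norm_le x
  norm_fderiv_le x := by simpa only [fderiv_neg, norm_neg] using hV.norm_fderiv_le x
  lipschitzWith_fderiv := by
    have : fderiv ℝ (-V) = -fderiv ℝ V := funext fun _ => fderiv_neg
    exact this ▸ hV.lipschitzWith_fderiv.neg

lemma add (hV : IsBoundedC11 K V) (hW : IsBoundedC11 K' W) : IsBoundedC11 (K + K') (V + W) := by
  have fderiv_eq : fderiv ℝ (V + W) = fun x => fderiv ℝ V x + fderiv ℝ W x :=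
    funext fun x => fderiv_add (hV.differentiable x) (hW.differentiable x)
  exact
    { differentiable := hV.differentiable.add hW.differentiable
      norm_le := fun x => norm_add_le_of_le (hV.norm_le x) (hW.norm_le x)
      norm_fderiv_le := fun x =>
        fderiv_eq ▸ norm_add_le_of_le (hV.norm_fderiv_le x) (hW.norm_fderiv_le x)
      lipschitzWith_fderiv :=
        fderiv_eq ▸ hV.lipschitzWith_fderiv.add hW.lipschitzWith_fderiv }

lemma norm_acceleration_le (hV : IsBoundedC11 K V) (x : E) : ‖acceleration V x‖ ≤ K ^ 2 :=
  ((fderiv ℝ V x).le_of_opNorm_le_of_le (hV.norm_fderiv_le x) (hV.norm_le x)).trans_eq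
    (sq (K : ℝ)).symm

lemma lipschitzWith_acceleration (hV : IsBoundedC11 K V) :
    LipschitzWith (2 * K ^ 2) (acceleration V) := by
  refine LipschitzWith.of_dist_le_mul fun x y => ?_
  rw [dist_eq_norm, dist_eq_norm]
  have split : acceleration V x - acceleration V y
      = (fderiv ℝ V x - fderiv ℝ V y) (V x) + fderiv ℝ V y (V x - V y) := by
    simp only [acceleration, map_sub, sub_apply]
    abel
  calc ‖acceleration V x - acceleration V y‖
      ≤ K * ‖x - y‖ * K + K * (K * ‖x - y‖) := split ▸ norm_add_le_of_le
        (ContinuousLinearMap.le_of_opNorm_le_of_le _ (hV.lipschitzWith_fderiv.norm_sub_le x y)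
          (hV.norm_le x))
        (ContinuousLinearMap.le_of_opNorm_le_of_le _ (hV.norm_fderiv_le y)
          (hV.lipschitzWith.norm_sub_le x y))
    _ = (2 * K ^ 2 : ℝ≥0) * ‖x - y‖ := by push_cast; ring

end IsBoundedC11

lemma norm_eulerStep_eulerStep_sub_le (hV : ∀ x, ‖V x‖ ≤ K') (hW : Differentiable ℝ W)
    (hW' : LipschitzWith K (fderiv ℝ W)) {h : ℝ} (hh : 0 ≤ h) (x : E) :
    ‖eulerStep h W (eulerStep h V x) - x - h • (V x + W x) - h ^ 2 • fderiv ℝ W x (V x)‖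
      ≤ K * K' ^ 2 * h ^ 3 := by
  have remainder_eq :
      eulerStep h W (eulerStep h V x) - x - h • (V x + W x) - h ^ 2 • fderiv ℝ W x (V x)
        = h • (W (eulerStep h V x) - W x - fderiv ℝ W x (eulerStep h V x - x)) := by
    simp only [eulerStep, add_sub_cancel_left, map_smul]
    module
  have step_le : ‖eulerStep h V x - x‖ ≤ h * K' := by
    rw [eulerStep, add_sub_cancel_left, norm_smul, Real.norm_of_nonneg hh]
    gcongr
    exact hV x
  rw [remainder_eq, norm_smul, Real.norm_of_nonneg hh]
  calc h * ‖W (eulerStep h V x) - W x - fderiv ℝ W x (eulerStep h V x - x)‖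
      ≤ h * (K * (h * K') ^ 2) := by
        gcongr
        exact (norm_sub_sub_fderiv_le hW hW' _ _).trans (by gcongr)
    _ = K * K' ^ 2 * h ^ 3 := by ring

section PerturbedFlow

variable {A B : E → E} {a b l : ℝ≥0} {h s t : ℝ} {γ : ℝ → E}

lemma norm_integralCurve_sub_le (hA : ∀ x, ‖A x‖ ≤ a) (hB : ∀ x, ‖B x‖ ≤ b) (hs : |s| ≤ 1)
    (hγ : IsIntegralCurveOn γ (fun _ x => A x + s • B x) (Icc 0 h)) (ht : t ∈ Icc 0 h) :
    ‖γ t - γ 0‖ ≤ (a + b) * t := by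
  have velocity_le : ∀ r ∈ Icc 0 h, ‖A (γ r) + s • B (γ r)‖ ≤ a + b := fun r _ =>
    norm_add_le_of_le (hA _) <| by
      rw [norm_smul, Real.norm_eq_abs]
      exact (mul_le_of_le_one_left (norm_nonneg _) hs).trans (hB _)
  simpa only [sub_zero] using norm_image_sub_le_of_norm_deriv_le_segment' hγ
    (fun r hr => velocity_le r (Ico_subset_Icc_self hr)) t ht

lemma norm_integralCurve_sub_linear_le (hA : ∀ x, ‖A x‖ ≤ a) (hA' : LipschitzWith l A)
    (hB : ∀ x, ‖B x‖ ≤ b) (hs : |s| ≤ h) (hh : h ≤ 1)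
    (hγ : IsIntegralCurveOn γ (fun _ x => A x + s • B x) (Icc 0 h)) (ht : t ∈ Icc 0 h) :
    ‖γ t - γ 0 - t • A (γ 0)‖ ≤ (l * (a + b) + b) * h * t := by
  have velocity_le : ∀ r ∈ Icc 0 h,
      ‖A (γ r) + s • B (γ r) - A (γ 0) - r • (0 : E)‖ ≤ (l * (a + b) + b) * h := by
    intro r hr
    have drift_le : ‖A (γ r) - A (γ 0)‖ ≤ l * ((a + b) * h) :=
      (hA'.norm_sub_le _ _).trans <| by
        gcongr
        exact (norm_integralCurve_sub_le hA hB (hs.trans hh) hγ hr).trans (by gcongr; exact hr.2)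
    have perturbation_le : ‖s • B (γ r)‖ ≤ h * b := by
      rw [norm_smul, Real.norm_eq_abs]
      exact mul_le_mul hs (hB _) (norm_nonneg _) ((abs_nonneg s).trans hs)
    calc ‖A (γ r) + s • B (γ r) - A (γ 0) - r • (0 : E)‖
        = ‖(A (γ r) - A (γ 0)) + s • B (γ r)‖ := by congr 1; module
      _ ≤ l * ((a + b) * h) + h * b := norm_add_le_of_le drift_le perturbation_le
      _ = (l * (a + b) + b) * h := by ring
  simpa only [smul_zero, sub_zero] using
    norm_sub_quadratic_le_of_norm_deriv_sub_affine_le hγ velocity_le ht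

lemma norm_integralCurve_sub_quadratic_le (hA : IsBoundedC11 a A) (hB : ∀ x, ‖B x‖ ≤ b)
    (hB' : LipschitzWith l B) (hs : |s| ≤ h) (hh : h ≤ 1)
    (hγ : IsIntegralCurveOn γ (fun _ x => A x + s • B x) (Icc 0 h)) (ht : t ∈ Icc 0 h) :
    ‖γ t - γ 0 - t • (A (γ 0) + s • B (γ 0)) - (t ^ 2 / 2) • acceleration A (γ 0)‖
      ≤ (a * (a + b) ^ 2 + a * (a * (a + b) + b) + l * (a + b)) * h ^ 2 * t := by
  set x := γ 0
  have hh₀ : 0 ≤ h := (abs_nonneg s).trans hs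
  refine norm_sub_quadratic_le_of_norm_deriv_sub_affine_le hγ (fun r hr => ?_) ht
  have displacement_le : ‖γ r - x‖ ≤ (a + b) * h :=
    (norm_integralCurve_sub_le hA.norm_le hB (hs.trans hh) hγ hr).trans (by gcongr; exact hr.2)
  have taylor_le : ‖A (γ r) - A x - fderiv ℝ A x (γ r - x)‖ ≤ a * ((a + b) * h) ^ 2 :=
    (norm_sub_sub_fderiv_le hA.differentiable hA.lipschitzWith_fderiv _ _).trans (by gcongr)
  have linear_le : ‖fderiv ℝ A x (γ r - x - r • A x)‖ ≤ a * ((a * (a + b) + b) * h * h) :=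
    ContinuousLinearMap.le_of_opNorm_le_of_le _ (hA.norm_fderiv_le x) <|
      (norm_integralCurve_sub_linear_le hA.norm_le hA.lipschitzWith hB hs hh hγ hr).trans
        (by gcongr; exact hr.2)
  have perturbation_le : ‖s • (B (γ r) - B x)‖ ≤ h * (l * ((a + b) * h)) := by
    rw [norm_smul, Real.norm_eq_abs]
    gcongr
    exact (hB'.norm_sub_le _ _).trans (by gcongr)
  calc ‖A (γ r) + s • B (γ r) - (A x + s • B x) - r • acceleration A x‖
      = ‖(A (γ r) - A x - fderiv ℝ A x (γ r - x)) + fderiv ℝ A x (γ r - x - r • A x)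
          + s • (B (γ r) - B x)‖ := by
        rw [map_sub _ (γ r - x), map_smul, acceleration]
        congr 1
        module
    _ ≤ a * ((a + b) * h) ^ 2 + a * ((a * (a + b) + b) * h * h) + h * (l * ((a + b) * h)) :=
        norm_add_le_of_le (norm_add_le_of_le taylor_le linear_le) perturbation_le
    _ = (a * (a + b) ^ 2 + a * (a * (a + b) + b) + l * (a + b)) * h ^ 2 := by ring

end PerturbedFlow

/-- The modified vector field, in the sense of backward error analysis, of an Euler step of length
`h` along `V` followed by one along `W`, without its Lie bracket term. -/
noncomputable def modifiedField (h : ℝ) (V W : E → E) (x : E) : E :=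
  V x + W x - (h / 2) • (acceleration V x + acceleration W x)

theorem exists_norm_modifiedField_integralCurve_sub_eulerStep_le (hV : IsBoundedC11 K V)
    (hW : IsBoundedC11 K' W) :
    ∃ C > (0 : ℝ), ∀ h ∈ Icc (0 : ℝ) 1, ∀ γ : ℝ → E,
      IsIntegralCurveOn γ (fun _ => modifiedField h V W) (Icc 0 h) →
      ‖γ h - eulerStep h W (eulerStep h V (γ 0))
        + (h ^ 2 / 2) • VectorField.lieBracket ℝ V W (γ 0)‖ ≤ C * h ^ 3 := by
  let a : ℝ≥0 := K + K'
  let b : ℝ≥0 := K ^ 2 + K' ^ 2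
  let l : ℝ≥0 := 2 * K ^ 2 + 2 * K' ^ 2
  let C : ℝ := a * (a + b) ^ 2 + a * (a * (a + b) + b) + l * (a + b) + K' * K ^ 2 + 1
  have hA : IsBoundedC11 a (V + W) := hV.add hW
  have hB : ∀ x, ‖acceleration V x + acceleration W x‖ ≤ b := fun x =>
    norm_add_le_of_le (hV.norm_acceleration_le x) (hW.norm_acceleration_le x)
  have hB' : LipschitzWith l fun x => acceleration V x + acceleration W x :=
    hV.lipschitzWith_acceleration.add hW.lipschitzWith_acceleration
  refine ⟨C, by positivity, fun h ⟨hh₀, hh₁⟩ γ hγ => ?_⟩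
  have half_step_le : |-(h / 2)| ≤ h := by
    rw [abs_neg, abs_of_nonneg (by positivity)]
    linarith
  have field_eq : modifiedField h V W
      = fun x => (V + W) x + -(h / 2) • (acceleration V x + acceleration W x) := by
    ext x
    rw [modifiedField, Pi.add_apply, neg_smul, sub_eq_add_neg]
  rw [field_eq] at hγ
  have curve_le := norm_integralCurve_sub_quadratic_le hA hB hB' half_step_le hh₁ hγ
    (right_mem_Icc.mpr hh₀)
  have steps_le := norm_eulerStep_eulerStep_sub_le hV.norm_le hW.differentiable
    hW.lipschitzWith_fderiv hh₀ (γ 0)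
  calc _ = ‖(γ h - γ 0
          - h • ((V + W) (γ 0) + -(h / 2) • (acceleration V (γ 0) + acceleration W (γ 0)))
          - (h ^ 2 / 2) • acceleration (V + W) (γ 0))
        - (eulerStep h W (eulerStep h V (γ 0)) - γ 0 - h • (V (γ 0) + W (γ 0))
          - h ^ 2 • fderiv ℝ W (γ 0) (V (γ 0)))‖ := by
        simp only [acceleration, VectorField.lieBracket, Pi.add_apply, add_apply, map_add,
          fderiv_add (hV.differentiable (γ 0)) (hW.differentiable (γ 0))]
        congr 1
        module
    _ ≤ _ := norm_sub_le_of_le curve_le steps_le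
    _ ≤ C * h ^ 3 := by
        simp only [C]
        linarith [pow_nonneg hh₀ 3]

end VectorFields

section Gradient

variable {E : Type*} [NormedAddCommGroup E] [InnerProductSpace ℝ E] [CompleteSpace E]
  {L L₁ L₂ : E → ℝ}

/-- The inverse of the Riesz isomorphism `InnerProductSpace.toDual ℝ E`, with conjugate-linearity
turned into linearity, so that lemmas on linear isometries apply to the gradient. -/
noncomputable def rieszEquiv (E : Type*) [NormedAddCommGroup E] [InnerProductSpace ℝ E]
    [CompleteSpace E] : StrongDual ℝ E ≃ₗᵢ[ℝ] E :=
  (InnerProductSpace.toDual ℝ E).symm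

lemma gradient_eq_rieszEquiv_comp_fderiv (L : E → ℝ) : ∇ L = rieszEquiv E ∘ fderiv ℝ L :=
  rfl

lemma contDiffAt_gradient {m n : WithTop ℕ∞} {x : E} (hL : ContDiffAt ℝ n L x)
    (hmn : m + 1 ≤ n) : ContDiffAt ℝ m (∇ L) x :=
  (rieszEquiv E).contDiff.contDiffAt.comp x (hL.fderiv_right hmn)

lemma norm_iteratedFDeriv_gradient (L : E → ℝ) (i : ℕ) (x : E) :
    ‖iteratedFDeriv ℝ i (∇ L) x‖ = ‖iteratedFDeriv ℝ (i + 1) L x‖ := by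
  rw [gradient_eq_rieszEquiv_comp_fderiv, (rieszEquiv E).norm_iteratedFDeriv_comp_left,
    norm_iteratedFDeriv_fderiv]

lemma isBoundedC11_gradient {K : ℝ≥0} (hL : ContDiff ℝ 3 L)
    (hb : ∀ i : ℕ, 1 ≤ i → i ≤ 3 → ∀ x, ‖iteratedFDeriv ℝ i L x‖ ≤ K) :
    IsBoundedC11 K (∇ L) := by
  have gradient_contDiff : ContDiff ℝ 2 (∇ L) :=
    contDiff_iff_contDiffAt.mpr fun _ => contDiffAt_gradient hL.contDiffAt (by norm_num)
  have fderiv_contDiff : ContDiff ℝ 1 (fderiv ℝ (∇ L)) :=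
    gradient_contDiff.fderiv_right (by norm_num)
  have bound : ∀ i < 3, ∀ x, ‖iteratedFDeriv ℝ i (∇ L) x‖ ≤ K := fun i hi x =>
    norm_iteratedFDeriv_gradient L i x ▸ hb (i + 1) (by lia) (by lia) x
  refine ⟨gradient_contDiff.differentiable (by norm_num), fun x => ?_, fun x => ?_,
    lipschitzWith_of_nnnorm_fderiv_le (fderiv_contDiff.differentiable (by norm_num)) fun x => ?_⟩
  · simpa only [norm_iteratedFDeriv_zero] using bound 0 (by norm_num) x
  · simpa only [norm_iteratedFDeriv_one] using bound 1 (by norm_num) x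
  · rw [← NNReal.coe_le_coe, coe_nnnorm, ← norm_iteratedFDeriv_one, norm_iteratedFDeriv_fderiv]
    exact bound 2 (by norm_num) x

lemma inner_fderiv_gradient (L : E → ℝ) (x u v : E) :
    inner ℝ (fderiv ℝ (∇ L) x u) v = fderiv ℝ (fderiv ℝ L) x u v := by
  rw [gradient_eq_rieszEquiv_comp_fderiv, (rieszEquiv E).comp_fderiv]
  exact InnerProductSpace.toDual_symm_apply

lemma isSymmetric_fderiv_gradient {x : E} (hL : IsSymmSndFDerivAt ℝ L x) :
    (fderiv ℝ (∇ L) x : E →ₗ[ℝ] E).IsSymmetric := fun u v => by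
  simp only [ContinuousLinearMap.coe_coe]
  rw [← real_inner_comm u, inner_fderiv_gradient, inner_fderiv_gradient, hL u v]

lemma hasGradientAt_norm_gradient_sq {x : E} (hL : ContDiffAt ℝ 2 L x) :
    HasGradientAt (fun y => ‖∇ L y‖ ^ 2) ((2 : ℝ) • acceleration (∇ L) x) x := by
  have gradient_differentiable : DifferentiableAt ℝ (∇ L) x :=
    (contDiffAt_gradient hL (m := 1) (by norm_num)).differentiableAt (by norm_num)
  have hessian_symm : (fderiv ℝ (∇ L) x : E →ₗ[ℝ] E).IsSymmetric :=
    isSymmetric_fderiv_gradient (hL.isSymmSndFDerivAt (by simp))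
  rw [hasGradientAt_iff_hasFDerivAt]
  refine gradient_differentiable.hasFDerivAt.norm_sq.congr_fderiv
    (ContinuousLinearMap.ext fun v => ?_)
  calc _ = 2 * inner ℝ (∇ L x) (fderiv ℝ (∇ L) x v) := nsmul_eq_mul 2 _
    _ = 2 * inner ℝ (acceleration (∇ L) x) v := congrArg (2 * ·) (hessian_symm (∇ L x) v).symm
    _ = inner ℝ ((2 : ℝ) • acceleration (∇ L) x) v := (real_inner_smul_left _ _ _).symm

/-- The loss `L̃₁₂` with implicit flatness regularization, whose gradient flow is compared with two
gradient descent steps of learning rate `h`. -/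
noncomputable def modifiedLoss (h : ℝ) (L₁ L₂ : E → ℝ) (x : E) : ℝ :=
  L₁ x + L₂ x + (h / 4) * ‖∇ L₁ x‖ ^ 2 + (h / 4) * ‖∇ L₂ x‖ ^ 2

lemma neg_gradient_modifiedLoss (hL₁ : ContDiff ℝ 2 L₁) (hL₂ : ContDiff ℝ 2 L₂) (h : ℝ) :
    -∇ (modifiedLoss h L₁ L₂) = modifiedField h (-∇ L₁) (-∇ L₂) := by
  ext x
  have loss_gradient : ∀ {L : E → ℝ}, ContDiff ℝ 2 L → HasGradientAt L (∇ L x) x := fun hL =>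
    (hL.differentiable (by norm_num) x).hasGradientAt
  have modifiedLoss_gradient : HasGradientAt (modifiedLoss h L₁ L₂)
      (∇ L₁ x + ∇ L₂ x + (h / 4) • (2 : ℝ) • acceleration (∇ L₁) x
        + (h / 4) • (2 : ℝ) • acceleration (∇ L₂) x) x := by
    rw [hasGradientAt_iff_hasFDerivAt]
    simp only [map_add, map_smulₛₗ _ (h / 4), conj_trivial]
    exact (((loss_gradient hL₁).hasFDerivAt.add (loss_gradient hL₂).hasFDerivAt).add
      ((hasGradientAt_norm_gradient_sq hL₁.contDiffAt).hasFDerivAt.const_mul (h / 4))).add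
      ((hasGradientAt_norm_gradient_sq hL₂.contDiffAt).hasFDerivAt.const_mul (h / 4))
  rw [Pi.neg_apply, modifiedLoss_gradient.gradient]
  simp only [modifiedField, acceleration_neg, Pi.neg_apply]
  module

theorem continual_learning_commuting_flows_general {K : ℝ}
    (hL₁ : ContDiff ℝ 3 L₁) (hL₂ : ContDiff ℝ 3 L₂)
    (hb₁ : ∀ i : ℕ, 1 ≤ i → i ≤ 3 → ∀ x, ‖iteratedFDeriv ℝ i L₁ x‖ ≤ K)
    (hb₂ : ∀ i : ℕ, 1 ≤ i → i ≤ 3 → ∀ x, ‖iteratedFDeriv ℝ i L₂ x‖ ≤ K) :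
    ∃ C > (0 : ℝ), ∀ h ∈ Icc (0 : ℝ) 1, ∀ θ : ℝ → E,
      IsIntegralCurveOn θ (fun _ => -∇ (modifiedLoss h L₁ L₂)) (Icc 0 h) →
      ‖θ h - eulerStep h (-∇ L₂) (eulerStep h (-∇ L₁) (θ 0))
        + (h ^ 2 / 2) • VectorField.lieBracket ℝ (∇ L₁) (∇ L₂) (θ 0)‖ ≤ C * h ^ 3 := by
  lift K to ℝ≥0 using (norm_nonneg _).trans (hb₁ 1 le_rfl (by norm_num) 0)
  have hV := (isBoundedC11_gradient hL₁ hb₁).neg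
  have hW := (isBoundedC11_gradient hL₂ hb₂).neg
  simpa only [lieBracket_neg_neg, neg_gradient_modifiedLoss (hL₁.of_le (by norm_num))
    (hL₂.of_le (by norm_num))] using
    exists_norm_modifiedField_integralCurve_sub_eulerStep_le hV hW

end Gradient

/-- **Continual learning with commuting task gradient flows.**
Let `L₁, L₂ : ℝⁿ → ℝ` be C³ with bounded first, second and third derivatives whose
gradient fields have identically vanishing Lie bracket `[∇L₁, ∇L₂] = 0`. Let `θ₂(h)` be the
result of a gradient descent step on `L₁` followed by one on `L₂`, both with learning
rate `h`, starting at `θ₀`. If for each `h > 0` the curve `θt h` solves the gradient flow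
`θ̇ = -∇L̃₁₂(θ)` with `θt h 0 = θ₀`, where
`L̃₁₂ = L₁ + L₂ + (h/4)‖∇L₁‖² + (h/4)‖∇L₂‖²`, then the discretization drift
`‖θt h h - θ₂(h)‖` is of order `O(h³)`. -/
theorem continual_learning_commuting_flows {n : ℕ}
    (L₁ L₂ : EuclideanSpace ℝ (Fin n) → ℝ)
    (hL₁ : ContDiff ℝ 3 L₁) (hL₂ : ContDiff ℝ 3 L₂)
    (K : ℝ)
    (hb₁ : ∀ i : ℕ, 1 ≤ i → i ≤ 3 → ∀ x, ‖iteratedFDeriv ℝ i L₁ x‖ ≤ K)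
    (hb₂ : ∀ i : ℕ, 1 ≤ i → i ≤ 3 → ∀ x, ‖iteratedFDeriv ℝ i L₂ x‖ ≤ K)
    (hcomm : ∀ θ : EuclideanSpace ℝ (Fin n),
      lieBracket (fun x => gradient L₁ x) (fun x => gradient L₂ x) θ = 0)
    (θ₀ : EuclideanSpace ℝ (Fin n))
    (θ₁ θ₂ : ℝ → EuclideanSpace ℝ (Fin n))
    (hθ₁ : ∀ h : ℝ, θ₁ h = θ₀ - h • gradient L₁ θ₀)
    (hθ₂ : ∀ h : ℝ, θ₂ h = θ₁ h - h • gradient L₂ (θ₁ h))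
    (Lmod : ℝ → EuclideanSpace ℝ (Fin n) → ℝ)
    (hLmod : ∀ h : ℝ, ∀ θ : EuclideanSpace ℝ (Fin n),
      Lmod h θ = L₁ θ + L₂ θ + (h / 4) * ‖gradient L₁ θ‖ ^ 2
        + (h / 4) * ‖gradient L₂ θ‖ ^ 2)
    (θt : ℝ → ℝ → EuclideanSpace ℝ (Fin n))
    (hinit : ∀ h : ℝ, 0 < h → θt h 0 = θ₀)
    (hode : ∀ h : ℝ, 0 < h → ∀ t ∈ Icc (0 : ℝ) h,
      HasDerivAt (θt h) (-(gradient (Lmod h) (θt h t))) t) :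
    ∃ C > (0 : ℝ), ∃ h₀ > (0 : ℝ), ∀ h ∈ Ioo (0 : ℝ) h₀,
      ‖θt h h - θ₂ h‖ ≤ C * h ^ 3 := by
  obtain ⟨C, hC, hdrift⟩ := continual_learning_commuting_flows_general hL₁ hL₂ hb₁ hb₂
  refine ⟨C, hC, 1, one_pos, fun h ⟨hh₀, hh₁⟩ => ?_⟩
  have flow : IsIntegralCurveOn (θt h) (fun _ => -∇ (modifiedLoss h L₁ L₂)) (Icc 0 h) :=
    fun t ht => (funext (hLmod h) ▸ hode h hh₀ t ht).hasDerivWithinAt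
  have bracket_eq_zero : VectorField.lieBracket ℝ (∇ L₁) (∇ L₂) θ₀ = 0 := hcomm θ₀
  simpa only [hinit h hh₀, bracket_eq_zero, smul_zero, add_zero, eulerStep, Pi.neg_apply, smul_neg,
    ← sub_eq_add_neg, ← hθ₁, ← hθ₂] using hdrift h ⟨hh₀.le, hh₁.le⟩ (θt h) flow
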